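/- The complete generating function of Gessel walks G(t;x,y) = Σ_{n≥0} (Σ_{i,j≥0} g(n;i,j) xⁱ yʲ) tⁿ, regarded as a formal power series in the three variables t, x, y over ℚ, is algebraic: there exists a nonzero polynomial P(T,t,x,y) ∈ ℚ[T,t,x,y] such that P(G(t;x,y), t, x, y) = 0. -/

import Mathlib

/-!
Everything takes place in the ring `M = ℚ⟦t, x, y⟧` with `t = X 0`, `x = X 1`, `y = X 2`; the
substitutions `x := 0` and `y := 0` are written `rho 1` and `rho 2`.

Removing the last step of a walk gives the kernel equation
`(xy - t(1+y)(1+x²y)) G = xy - R - S + A`, where `R = t G(x,0)` depends on `t, x` only,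
`S = t(1+y) G(0,y)` on `t, y` only, and `A = t G(0,0)` on `t` only. The proof is an elementary
version of Tutte's method of invariants.

* The substitution `tau : t ↦ xy / ((1+y)(1+x²y))` kills the kernel, so that
  `tau R = xy + tau A - tau S`. If `e` is free of `y`, vanishes at `x = 0`, if `f` is free of `x`,
  and `tau e = tau f`, then `e = f = 0` (`invariant_lemma`): evaluating at `x = 0` and at `y = 0`
  shows that `t` divides both, and one can divide by `t` for ever.
* With `α = 1 + xR` and `y β = t(1+y)(A-S) + y`, the equation above reads
  `tau β · (1+x²y) = tau α`. This yields two rational expressions, one in `t, x, α` and one in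
  `t, y, β`, with the same image under `tau`; by the lemma both are equal to a series `d` in `t`.
  So `α` and `β` satisfy explicit cubic equations whose coefficients involve only `t, x, y` and
  three unknown series in `t`: `m = 1 + 2tA`, `c` and `d` (`exists_cubics`).
* Three power series `x = X(t)`, `y = Y₊(t)`, `y = Y₋(t)`, expressible by Catalan series, are
  critical for the two cubics: differentiating the cubic and evaluating there forces the
  derivative of the cubic with respect to `α`, resp. `β`, to vanish (`x_point`, `y_point`).
  After normalisation, the polynomial `v³ - m v² + P v - δ`, with `δ = t²d`, has a double root for
  the three values `P = s + tc`, where `s = 1/4`, `2t - 4t²`, `-2t - 4t²`.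
* Hence its discriminant, as a polynomial in `P`, vanishes at these three points; divided
  differences express `tc` and `mδ` by `m` and `t`, and what remains is a non-trivial polynomial
  equation for `m` over `ℚ[t]` (`elimination`). Therefore `m`, then `A, c, d`, then `α, β`, hence
  `R, S`, and finally `G` are algebraic.
-/

noncomputable section

/-- The set of admissible steps for Gessel walks. -/
def gesselSteps : Set (ℤ × ℤ) := {(1, 0), (-1, 0), (1, 1), (-1, -1)}

/-- The position of the walk `w` after its first `k` steps. -/
def walkPos {n : ℕ} (w : Fin n → ℤ × ℤ) (k : ℕ) : ℤ × ℤ :=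
  ∑ m ∈ Finset.univ.filter (fun m : Fin n => (m : ℕ) < k), w m

/-- `w` is a Gessel walk: every step is admissible and the walk (which starts at
the origin) never leaves the first quadrant. -/
def IsGesselWalk {n : ℕ} (w : Fin n → ℤ × ℤ) : Prop :=
  (∀ m, w m ∈ gesselSteps) ∧ ∀ k ≤ n, 0 ≤ (walkPos w k).1 ∧ 0 ≤ (walkPos w k).2

/-- The number of Gessel walks of length `n` ending at `(i, j)`. -/
def g (n : ℕ) (i j : ℤ) : ℕ :=
  Nat.card {w : Fin n → ℤ × ℤ // IsGesselWalk w ∧ walkPos w n = (i, j)}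

/-- The complete generating function `G(t;x,y)` of Gessel walks, as a formal power
series in the three variables `t = 0`, `x = 1`, `y = 2`: the coefficient of
`t^n x^i y^j` is `g(n;i,j)`. -/
def GesselGF : MvPowerSeries (Fin 3) ℚ := fun e => (g (e 0) (e 1) (e 2) : ℚ)

/-! ### The recursion for the numbers of walks -/

/-- The admissible steps as a `Finset`. -/
def stepFinset : Finset (ℤ × ℤ) := {(1, 0), (-1, 0), (1, 1), (-1, -1)}

lemma mem_stepFinset {s : ℤ × ℤ} : s ∈ stepFinset ↔ s ∈ gesselSteps := by
  simp [stepFinset, gesselSteps]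

/-- Gessel walks of length `n` ending at `p`; `g n i j` is the cardinality of
`Walks n (i, j)`. -/
abbrev Walks (n : ℕ) (p : ℤ × ℤ) : Type :=
  {w : Fin n → ℤ × ℤ // IsGesselWalk w ∧ walkPos w n = p}

instance (n : ℕ) (p : ℤ × ℤ) : Finite (Walks n p) :=
  Finite.of_injective (fun (w : Walks n p) (m : Fin n) =>
      (⟨w.1 m, mem_stepFinset.2 (w.2.1.1 m)⟩ : stepFinset)) (by
    intro w w' h
    ext1; funext m
    simpa using congrFun h m)

lemma walkPos_snoc_of_le {n : ℕ} (w : Fin n → ℤ × ℤ) (s : ℤ × ℤ) {k : ℕ} (hk : k ≤ n) :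
    walkPos (Fin.snoc (α := fun _ => ℤ × ℤ) w s) k = walkPos w k := by
  simp only [walkPos, Finset.sum_filter, Fin.sum_univ_castSucc, Fin.snoc_castSucc, Fin.snoc_last,
    Fin.val_castSucc, Fin.val_last]
  rw [if_neg (by omega), add_zero]

lemma walkPos_snoc_last {n : ℕ} (w : Fin n → ℤ × ℤ) (s : ℤ × ℤ) :
    walkPos (Fin.snoc (α := fun _ => ℤ × ℤ) w s) (n + 1) = walkPos w n + s := by
  simp only [walkPos, Finset.sum_filter, Fin.sum_univ_castSucc, Fin.snoc_castSucc, Fin.snoc_last,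
    Fin.val_castSucc, Fin.val_last]
  rw [if_pos (by omega)]
  congr 1
  refine Finset.sum_congr rfl fun m _ => ?_
  rw [if_pos (by omega), if_pos (by omega)]

lemma isGesselWalk_snoc {n : ℕ} (w : Fin n → ℤ × ℤ) (s : ℤ × ℤ) :
    IsGesselWalk (Fin.snoc (α := fun _ => ℤ × ℤ) w s) ↔
      IsGesselWalk w ∧ s ∈ gesselSteps ∧
        0 ≤ (walkPos w n + s).1 ∧ 0 ≤ (walkPos w n + s).2 := by
  unfold IsGesselWalk
  rw [Fin.forall_fin_succ']
  simp only [Fin.snoc_castSucc, Fin.snoc_last]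
  constructor
  · rintro ⟨⟨h1, h2⟩, h3⟩
    refine ⟨⟨h1, fun k hk => ?_⟩, h2, ?_⟩
    · rw [← walkPos_snoc_of_le w s hk]; exact h3 k (by omega)
    · rw [← walkPos_snoc_last]; exact h3 _ le_rfl
  · rintro ⟨⟨h1, h3⟩, h2, h4⟩
    refine ⟨⟨h1, h2⟩, fun k hk => ?_⟩
    rcases Nat.le_succ_iff.1 hk with hk | rfl
    · rw [walkPos_snoc_of_le w s hk]; exact h3 k hk
    · rw [walkPos_snoc_last]; exact h4

/-- Removing the last step `s` of a walk ending at a point `p` of the quadrant. -/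
def walksSuccEquiv (n : ℕ) (p : ℤ × ℤ) (h1 : 0 ≤ p.1) (h2 : 0 ≤ p.2) :
    Walks (n + 1) p ≃ Σ s : stepFinset, Walks n (p - s) where
  toFun w :=
    have hw : Fin.snoc (α := fun _ => ℤ × ℤ) (Fin.init w.1) (w.1 (Fin.last n)) = w.1 :=
      Fin.snoc_init_self _
    have hG := (isGesselWalk_snoc (Fin.init w.1) (w.1 (Fin.last n))).1 (by rw [hw]; exact w.2.1)
    ⟨⟨w.1 (Fin.last n), mem_stepFinset.2 hG.2.1⟩, Fin.init w.1, hG.1, by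
      have := w.2.2
      rw [← hw, walkPos_snoc_last] at this
      exact eq_sub_of_add_eq this⟩
  invFun w := ⟨Fin.snoc (α := fun _ => ℤ × ℤ) w.2.1 w.1.1, by
    have h := w.2.2.2
    rw [eq_sub_iff_add_eq] at h
    refine ⟨(isGesselWalk_snoc _ _).2 ⟨w.2.2.1, mem_stepFinset.1 w.1.2, ?_⟩, ?_⟩
    · rw [h]; exact ⟨h1, h2⟩
    · rw [walkPos_snoc_last, h]⟩
  left_inv w := by ext1; exact Fin.snoc_init_self _
  right_inv w := by
    refine Sigma.subtype_ext ?_ ?_ <;> simp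

lemma g_succ (n : ℕ) (i j : ℤ) (hi : 0 ≤ i) (hj : 0 ≤ j) :
    g (n + 1) i j = g n (i - 1) j + g n (i + 1) j + g n (i - 1) (j - 1) + g n (i + 1) (j + 1) := by
  unfold g
  rw [Nat.card_congr (walksSuccEquiv n (i, j) hi hj), Nat.card_sigma,
    Finset.sum_coe_sort stepFinset (fun s => Nat.card (Walks n ((i, j) - s)))]
  simp [stepFinset, Walks, add_assoc]

lemma g_of_neg (n : ℕ) (i j : ℤ) (h : i < 0 ∨ j < 0) : g n i j = 0 := by
  unfold g
  rw [Nat.card_eq_zero]; left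
  refine ⟨fun w => ?_⟩
  have := w.2.1.2 n le_rfl
  rw [w.2.2] at this
  rcases h with h | h <;> simp only at this <;> omega

lemma g_zero (i j : ℤ) : g 0 i j = if i = 0 ∧ j = 0 then 1 else 0 := by
  unfold g
  have h0 : ∀ (w : Fin 0 → ℤ × ℤ) k, walkPos w k = 0 := fun w k => by simp [walkPos]
  split_ifs with h
  · obtain ⟨rfl, rfl⟩ := h
    have : Unique (Walks 0 (0, 0)) :=
      { default := ⟨Fin.elim0, ⟨fun m => m.elim0, fun k _ => by simp [h0]⟩, h0 _ _⟩
        uniq := fun w => by ext1; exact Subsingleton.elim _ _ }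
    exact Nat.card_unique
  · rw [Nat.card_eq_zero]; left
    refine ⟨fun w => h ?_⟩
    have := w.2.2
    rw [h0] at this
    simpa [Prod.ext_iff, eq_comm] using this

open MvPowerSeries

/-! ### Substitutions -/

/-- The ring `ℚ⟦t, x, y⟧`, with `t = X 0`, `x = X 1`, `y = X 2`. -/
abbrev M : Type := MvPowerSeries (Fin 3) ℚ

instance : IsDomain M := NoZeroDivisors.to_isDomain _

/-- The substitution `X i ↦ v i`, for series `v i` without constant term. -/
def sb (v : Fin 3 → M) (hv : ∀ i, constantCoeff (v i) = 0) : M →ₐ[ℚ] M :=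
  substAlgHom (hasSubst_of_constantCoeff_zero hv)

lemma sb_X (v : Fin 3 → M) (hv) (i : Fin 3) : sb v hv (X i) = v i := substAlgHom_X _ _

lemma sb_sb {v w u : Fin 3 → M} (hv hw hu) (h : ∀ i, sb w hw (v i) = u i) (f : M) :
    sb w hw (sb v hv f) = sb u hu f := by
  obtain rfl : u = fun i => sb w hw (v i) := funext fun i => (h i).symm
  refine (substAlgHom_comp_substAlgHom_apply _ _ _).trans ?_
  simp [sb, substAlgHom_apply]

lemma constantCoeff_rhoVec (i j : Fin 3) :
    constantCoeff ((if j = i then 0 else X j : M)) = 0 := by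
  split_ifs <;> simp

/-- The substitution `X i ↦ 0`, keeping the other variables. Thus `rho i f = f` says that `f`
does not involve `X i`. -/
def rho (i : Fin 3) : M →ₐ[ℚ] M := sb (fun j => if j = i then 0 else X j) (constantCoeff_rhoVec i)

lemma rho_X (i j : Fin 3) : rho i (X j) = if j = i then 0 else X j := sb_X _ _ _

lemma coeff_rho (i : Fin 3) (f : M) (m : Fin 3 →₀ ℕ) :
    coeff m (rho i f) = if m i = 0 then coeff m f else 0 := by
  have h : rho i f = rescale (fun j => if j = i then (0 : ℚ) else 1) f := by
    rw [rescale_eq_subst, rho, sb, substAlgHom_apply]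
    congr 1
    funext j
    by_cases hj : j = i <;> simp [hj]
  rw [h, coeff_rescale]
  split_ifs with hm
  · rw [Finsupp.prod, Finset.prod_eq_one, one_mul]
    intro j hj
    rw [if_neg, one_pow]
    rintro rfl
    simp [hm] at hj
  · rw [Finsupp.prod, Finset.prod_eq_zero (i := i), zero_mul] <;> simp [hm]

lemma X_dvd_sub_rho (i : Fin 3) (f : M) : X i ∣ f - rho i f := by
  rw [X_dvd_iff]; intro m hm; simp [coeff_rho i f m, hm]

/-! ### The kernel equation -/

/-- The exponent of the monomial `tⁿ xⁱ yʲ`. -/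
def ix (n i j : ℕ) : Fin 3 →₀ ℕ := Finsupp.equivFunOnFinite.symm ![n, i, j]

/-- The coefficient of `tⁿ xⁱ yʲ`. -/
def cf (f : M) (n i j : ℕ) : ℚ := coeff (ix n i j) f

lemma ext_cf {f h : M} (H : ∀ n i j, cf f n i j = cf h n i j) : f = h := by
  ext m
  have : m = ix (m 0) (m 1) (m 2) := by
    ext k; fin_cases k <;> simp [ix]
  rw [this]; exact H _ _ _

@[simp] lemma cf_add (f h : M) (n i j) : cf (f + h) n i j = cf f n i j + cf h n i j := map_add _ _ _
@[simp] lemma cf_sub (f h : M) (n i j) : cf (f - h) n i j = cf f n i j - cf h n i j := map_sub _ _ _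

lemma coeff_X_mul_ite (s : Fin 3) (f : M) (m : Fin 3 →₀ ℕ) :
    coeff m (X s * f) = if m s = 0 then 0 else coeff (m - Finsupp.single s 1) f := by
  rw [X, coeff_monomial_mul, one_mul]
  by_cases h : m s = 0
  · rw [if_neg, if_pos h]; intro H; have := H s; simp [h] at this
  · rw [if_pos, if_neg h]; intro k
    by_cases hk : k = s
    · subst hk; simp; omega
    · simp [Ne.symm hk]

lemma ix_sub0 (n i j : ℕ) : ix (n + 1) i j - Finsupp.single 0 1 = ix n i j := by
  ext k; fin_cases k <;> simp [ix]
lemma ix_sub1 (n i j : ℕ) : ix n (i + 1) j - Finsupp.single 1 1 = ix n i j := by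
  ext k; fin_cases k <;> simp [ix]
lemma ix_sub2 (n i j : ℕ) : ix n i (j + 1) - Finsupp.single 2 1 = ix n i j := by
  ext k; fin_cases k <;> simp [ix]

@[simp] lemma cf_t_zero (f : M) (i j) : cf (X 0 * f) 0 i j = 0 := by
  simp [cf, coeff_X_mul_ite, ix]
@[simp] lemma cf_x_zero (f : M) (n j) : cf (X 1 * f) n 0 j = 0 := by
  simp [cf, coeff_X_mul_ite, ix]
@[simp] lemma cf_y_zero (f : M) (n i) : cf (X 2 * f) n i 0 = 0 := by
  simp [cf, coeff_X_mul_ite, ix]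
@[simp] lemma cf_t_succ (f : M) (n i j) : cf (X 0 * f) (n + 1) i j = cf f n i j := by
  rw [cf, coeff_X_mul_ite, ix_sub0, if_neg (by simp [ix]), cf]
@[simp] lemma cf_x_succ (f : M) (n i j) : cf (X 1 * f) n (i + 1) j = cf f n i j := by
  rw [cf, coeff_X_mul_ite, ix_sub1, if_neg (by simp [ix]), cf]
@[simp] lemma cf_y_succ (f : M) (n i j) : cf (X 2 * f) n i (j + 1) = cf f n i j := by
  rw [cf, coeff_X_mul_ite, ix_sub2, if_neg (by simp [ix]), cf]
@[simp] lemma cf_rho1 (f : M) (n i j) : cf (rho 1 f) n i j = if i = 0 then cf f n i j else 0 := by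
  simp [cf, coeff_rho, ix]
@[simp] lemma cf_rho2 (f : M) (n i j) : cf (rho 2 f) n i j = if j = 0 then cf f n i j else 0 := by
  simp [cf, coeff_rho, ix]
@[simp] lemma cf_G (n i j) : cf GesselGF n i j = g n i j := by
  simp [cf, coeff_apply, GesselGF, ix]
lemma cf_one (n i j) : cf 1 n i j = if n = 0 ∧ i = 0 ∧ j = 0 then 1 else 0 := by
  rw [cf, coeff_one]
  congr 1
  simp only [eq_iff_iff, Finsupp.ext_iff, Fin.forall_fin_succ]
  simp [ix]

/-- The kernel equation in a form where each coefficient is computed by the `cf` simp lemmas. -/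
lemma functional_equation :
    X 1 * (X 2 * GesselGF) - X 0 * (GesselGF + X 2 * GesselGF + X 1 * (X 1 * (X 2 * GesselGF))
      + X 1 * (X 1 * (X 2 * (X 2 * GesselGF)))) =
    X 1 * (X 2 * 1) - X 0 * rho 2 GesselGF - X 0 * (rho 1 GesselGF + X 2 * rho 1 GesselGF)
      + X 0 * rho 1 (rho 2 GesselGF) := by
  apply ext_cf
  rintro (_ | n) (_ | _ | i) (_ | _ | j) <;>
    simp (disch := omega) [-mul_one, cf_one, g_zero, g_succ, g_of_neg] <;> ring_nf <;>
    try omega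

/-! ### The substitution cancelling the kernel -/

lemma MX_ne_zero (i : Fin 3) : (X i : M) ≠ 0 :=
  nonZeroDivisors.ne_zero X_mem_nonzeroDivisors

/-- The solution `t = xy / ((1+y)(1+x²y))` of the kernel equation. -/
def tauT : M := X 1 * X 2 * ((1 + X 2) * (1 + X 1 ^ 2 * X 2))⁻¹

lemma tauT_mul : tauT * ((1 + X 2) * (1 + X 1 ^ 2 * X 2)) = X 1 * X 2 := by
  rw [tauT, mul_assoc, MvPowerSeries.inv_mul_cancel, mul_one]
  simp

lemma tauT_ne_zero : tauT ≠ 0 := by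
  intro h
  have := tauT_mul
  rw [h, zero_mul, eq_comm, mul_eq_zero] at this
  rcases this with h | h <;> exact MX_ne_zero _ h

lemma constantCoeff_tauVec (i : Fin 3) : constantCoeff ((![tauT, X 1, X 2] : Fin 3 → M) i) = 0 := by
  fin_cases i <;> simp [tauT]

/-- The substitution `t ↦ tauT`, fixing `x` and `y`; it kills the kernel. -/
def tau : M →ₐ[ℚ] M := sb ![tauT, X 1, X 2] constantCoeff_tauVec

lemma tau_t : tau (X 0) = tauT := sb_X _ _ _
lemma tau_x : tau (X 1) = X 1 := sb_X _ _ _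
lemma tau_y : tau (X 2) = X 2 := sb_X _ _ _

lemma rho_rho (i j : Fin 3) (f : M) : rho i (rho j f) = rho j (rho i f) := by
  ext m; simp only [coeff_rho]; split_ifs <;> rfl

lemma rho_idem (i : Fin 3) (f : M) : rho i (rho i f) = rho i f := by
  ext m; simp only [coeff_rho]; split_ifs <;> rfl

lemma rho_tauT (i : Fin 3) (hi : i ≠ 0) : rho i tauT = 0 := by
  fin_cases i <;> simp [tauT, rho_X] at *

/-- Both `x := 0` and `y := 0` send `tauT` to `0`, hence turn `tau f` into a value at `t = 0`. -/
lemma rho_tau (i : Fin 3) (hi : i ≠ 0) (f : M) : rho i (tau f) = rho 0 (rho i f) := by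
  let u : Fin 3 → M := fun j => rho i (![tauT, X 1, X 2] j)
  have hu : ∀ j, constantCoeff (u j) = 0 := by
    intro j
    fin_cases j <;> simp [u, rho_tauT i hi, rho_X, constantCoeff_rhoVec]
  unfold tau
  rw [show rho i (sb _ constantCoeff_tauVec f) = sb u hu f from
    sb_sb _ (constantCoeff_rhoVec i) _ (fun j => rfl) f]
  refine (sb_sb (constantCoeff_rhoVec i) (constantCoeff_rhoVec 0) hu (fun j => ?_) f).symm
  change rho 0 _ = _
  fin_cases j <;> fin_cases i <;> simp [u, rho_X, rho_tauT] at *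

lemma eq_zero_of_forall_dvd {f : M} (h : ∀ n, X 0 ^ n ∣ f) : f = 0 := by
  ext m
  exact X_pow_dvd_iff.1 (h (m 0 + 1)) m (Nat.lt_succ_self _)

/-- A series in `t, x` vanishing at `x = 0` and a series in `t, y` with the same image under `tau`
are both zero. -/
lemma invariant_lemma {e f : M} (he : rho 2 e = e) (hf : rho 1 f = f) (h0 : rho 1 e = 0)
    (h : tau e = tau f) : e = 0 ∧ f = 0 := by
  -- infinite descent: all hypotheses survive the division of `e` and `f` by `t`
  have key : ∀ n, ∃ e' f' : M, e = X 0 ^ n * e' ∧ f = X 0 ^ n * f' ∧ rho 2 e' = e' ∧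
      rho 1 f' = f' ∧ rho 1 e' = 0 ∧ tau e' = tau f' := by
    intro n
    induction n with
    | zero => exact ⟨e, f, by simp, by simp, he, hf, h0, h⟩
    | succ n ih =>
      obtain ⟨e, f, rfl, rfl, he, hf, h0, h⟩ := ih
      have h1 := congrArg (rho 1) h
      rw [rho_tau 1 (by decide), rho_tau 1 (by decide), h0, hf, map_zero] at h1
      have h2 := congrArg (rho 2) h
      rw [rho_tau 2 (by decide), rho_tau 2 (by decide), he, rho_rho, ← h1, map_zero] at h2
      obtain ⟨e', he'⟩ := X_dvd_sub_rho 0 e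
      obtain ⟨f', hf'⟩ := X_dvd_sub_rho 0 f
      rw [h2, sub_zero] at he'
      rw [← h1, sub_zero] at hf'
      subst he' hf'
      have hX : (X 0 : M) ≠ 0 := MX_ne_zero _
      refine ⟨e', f', by ring, by ring, ?_, ?_, ?_, ?_⟩
      · simpa [rho_X, hX] using he
      · simpa [rho_X, hX] using hf
      · simpa [rho_X, hX] using h0
      · simpa [tau_t, tauT_ne_zero] using h
  constructor <;> refine eq_zero_of_forall_dvd fun n => ?_
  · obtain ⟨e', f', h1, -⟩ := key n; exact ⟨e', h1⟩
  · obtain ⟨e', f', -, h1, -⟩ := key n; exact ⟨f', h1⟩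

/-! ### Two cubic equations -/

/-- `R = t G(x, 0)`. -/
def serR : M := X 0 * rho 2 GesselGF

/-- `S = t (1 + y) G(0, y)`. -/
def serS : M := X 0 * (1 + X 2) * rho 1 GesselGF

/-- `A = t G(0, 0)`, the common value of `R` at `x = 0` and of `S` at `y = 0`. -/
def serA : M := X 0 * rho 1 (rho 2 GesselGF)

lemma kernel_equation :
    (X 1 * X 2 - X 0 * (1 + X 2) * (1 + X 1 ^ 2 * X 2)) * GesselGF =
      X 1 * X 2 - serR - serS + serA := by
  unfold serR serS serA
  linear_combination functional_equation

/-- The image of the kernel equation under `tau`. -/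
lemma tau_equation : tau serR = X 1 * X 2 + tau serA - tau serS := by
  have h := congrArg tau kernel_equation
  simp only [map_mul, map_sub, map_add, map_pow, map_one, tau_t, tau_x, tau_y] at h
  linear_combination h + tau GesselGF * tauT_mul

/-- The series `α = 1 + xR` and `β = 1 + t(1+y)(A-S)/y` satisfy cubic equations whose coefficients
involve, besides `t, x, y`, only the series `A`, `c` and `d` in `t`. Up to the factor `t²`, both
cubics state that an expression, one in `t, x`, the other in `t, y`, equals `d`; the two
expressions have the same image under `tau`. -/
lemma exists_cubics : ∃ c d α β S' : M,
    rho 1 c = c ∧ rho 2 c = c ∧ rho 1 d = d ∧ rho 2 d = d ∧ rho 2 α = α ∧ rho 1 β = β ∧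
    α = 1 + X 1 * serR ∧ X 2 * β = X 0 * (1 + X 2) * (serA - serS) + X 2 ∧
    β = 1 - X 0 * S' ∧
    α * ((1 + X 1 ^ 2) * (X 1 - X 0 * (1 + X 1 ^ 2)) + X 0 * α ^ 2
      - (1 + 2 * X 0 * serA) * X 1 * α + c * X 1 ^ 2) = d * X 1 ^ 3 ∧
    β * ((X 2 ^ 2 - 1) ^ 2 * X 0 ^ 2 + X 2 ^ 2 + X 2 ^ 3 * β ^ 2
      - (1 + 2 * X 0 * serA) * X 2 ^ 2 * β * (1 + X 2) + c * X 0 * X 2 * (1 + X 2) ^ 2) =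
      X 0 ^ 2 * d * (1 + X 2) ^ 3 := by
  have hX1 : (X 1 : M) ≠ 0 := MX_ne_zero 1
  have hX2 : (X 2 : M) ≠ 0 := MX_ne_zero 2
  have hA1 : rho 1 serA = serA := by simp [serA, rho_X, rho_idem]
  have hA2 : rho 2 serA = serA := by simp [serA, rho_X, rho_rho 1 2, rho_idem]
  have hR2 : rho 2 serR = serR := by simp [serR, rho_X, rho_idem]
  have hR1 : rho 1 serR = serA := by simp [serR, serA, rho_X]
  have hS1 : rho 1 serS = serS := by simp [serS, rho_X, rho_idem]
  have hS2 : rho 2 serS = serA := by simp [serS, serA, rho_X, rho_rho 1 2]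
  obtain ⟨R1, hR1'⟩ := X_dvd_sub_rho 1 serR
  rw [hR1] at hR1'
  have hR12 : rho 2 R1 = R1 := by
    have := congrArg (rho 2) hR1'
    rw [map_sub, map_mul, hR2, hA2, rho_X, if_neg (by decide), hR1'] at this
    exact (mul_left_cancel₀ hX1 this).symm
  obtain ⟨R2, hR2'⟩ := X_dvd_sub_rho 1 R1
  set r := rho 1 R1 with hr
  have hr1 : rho 1 r = r := rho_idem _ _
  have hr2 : rho 2 r = r := by rw [hr, rho_rho, hR12]
  have hR22 : rho 2 R2 = R2 := by
    have := congrArg (rho 2) hR2'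
    rw [map_sub, map_mul, hR12, hr2, rho_X, if_neg (by decide), hR2'] at this
    exact (mul_left_cancel₀ hX1 this).symm
  obtain ⟨S1, hS1'⟩ := X_dvd_sub_rho 2 serS
  rw [hS2] at hS1'
  have hS11 : rho 1 S1 = S1 := by
    have := congrArg (rho 1) hS1'
    rw [map_sub, map_mul, hS1, hA1, rho_X, if_neg (by decide), hS1'] at this
    exact (mul_left_cancel₀ hX2 this).symm
  have hR : serR = serA + X 1 * (r + X 1 * R2) := by linear_combination hR1' + X 1 * hR2'
  have hS : serS = serA + X 2 * S1 := by linear_combination hS1'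
  set a := serA with ha
  obtain ⟨m, hm⟩ : ∃ m : M, m = 1 + 2 * X 0 * a := ⟨_, rfl⟩
  -- `c` is chosen such that the left-hand side of the cubic for `α` is divisible by `x ^ 3`;
  -- `N` is the quotient
  obtain ⟨c, hc⟩ : ∃ c : M, c = 2 * X 0 + a + X 0 * a ^ 2 - 2 * X 0 * r := ⟨_, rfl⟩
  obtain ⟨α, hα⟩ : ∃ α : M, α = 1 + X 1 * serR := ⟨_, rfl⟩
  obtain ⟨N, hN⟩ : ∃ N : M, N = α * (1 - X 0 * X 1 + X 0 * ((2 * R2 + 2 * a * r)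
    + X 1 * (r ^ 2 + 2 * a * R2) + 2 * r * R2 * X 1 ^ 2 + R2 ^ 2 * X 1 ^ 3)
    - m * (r + R2 * X 1)) := ⟨_, rfl⟩
  obtain ⟨β, hβ⟩ : ∃ β : M, β = 1 - X 0 * ((1 + X 2) * S1) := ⟨_, rfl⟩
  obtain ⟨B, hB⟩ : ∃ B : M, B = (X 2 ^ 2 - 1) ^ 2 * X 0 ^ 2 + X 2 ^ 2 + X 2 ^ 3 * β ^ 2
      - m * X 2 ^ 2 * β * (1 + X 2) + c * X 0 * X 2 * (1 + X 2) ^ 2 := ⟨_, rfl⟩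
  have hN3 : X 1 ^ 3 * N = α * ((1 + X 1 ^ 2) * (X 1 - X 0 * (1 + X 1 ^ 2)) + X 0 * α ^ 2
      - m * X 1 * α + c * X 1 ^ 2) := by
    rw [hN]
    have : α = 1 + a * X 1 + r * X 1 ^ 2 + R2 * X 1 ^ 3 := by rw [hα, hR]; ring
    rw [this, hc, hm]; ring
  have two : ∀ i, rho i (2 : M) = 2 := fun i => map_ofNat _ 2
  have hm1 : rho 1 m = m := by simp [hm, rho_X, hA1, two]
  have hm2 : rho 2 m = m := by simp [hm, rho_X, hA2, two]
  have hc1 : rho 1 c = c := by simp [hc, rho_X, hA1, hr1, two]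
  have hc2 : rho 2 c = c := by simp [hc, rho_X, hA2, hr2, two]
  have hα2 : rho 2 α = α := by simp [hα, rho_X, hR2]
  have hβ1 : rho 1 β = β := by simp [hβ, rho_X, hS11]
  have hN2 : rho 2 N = N := by simp [hN, rho_X, hα2, hR22, hm2, hA2, hr2, two]
  have hB1 : rho 1 B = B := by simp [hB, rho_X, hβ1, hm1, hc1]
  obtain ⟨d, hd⟩ : ∃ d, d = rho 1 N := ⟨_, rfl⟩
  have hd1 : rho 1 d = d := by rw [hd, rho_idem]
  have hd2 : rho 2 d = d := by rw [hd, rho_rho, hN2]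
  obtain ⟨w, hw⟩ : ∃ w : M, w * (1 + X 2) = 1 :=
    ⟨(1 + X 2)⁻¹, MvPowerSeries.inv_mul_cancel _ (by simp)⟩
  have h1y : (1 + X 2 : M) ≠ 0 := right_ne_zero_of_mul_eq_one hw
  have hw1 : rho 1 w = w := by
    have := congrArg (rho 1) hw
    simp only [map_mul, map_add, map_one, rho_X] at this
    apply mul_right_cancel₀ h1y
    simpa [hw] using this
  have hyβ : X 2 * β = X 0 * (1 + X 2) * (a - serS) + X 2 := by rw [hβ, hS]; ring
  -- the relation `yβ(1 + x²y) = y(1 + xR)` holds after applying `tau`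
  have hq : (1 + X 1 ^ 2 * X 2 : M) ≠ 0 := by
    intro h
    simpa using congrArg constantCoeff h
  have hτ : tau β * (1 + X 1 ^ 2 * X 2) = tau α := by
    apply mul_left_cancel₀ hX2
    have h1 := congrArg tau hyβ
    have h2 := congrArg tau hα
    simp only [map_mul, map_sub, map_add, map_pow, map_one, tau_t, tau_x, tau_y] at h1 h2
    rw [h2]
    linear_combination (1 + X 1 ^ 2 * X 2) * h1 + (tau a - tau serS) * tauT_mul
      - X 2 * X 1 * tau_equation
  have hmain : tau (X 0 ^ 2 * (N - d)) = tau (β * B * w ^ 3 - X 0 ^ 2 * d) := by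
    have h1 := congrArg tau hN3
    have h2 := congrArg tau hB
    have h3 := congrArg tau hw
    have h4 := tauT_mul
    simp only [map_mul, map_sub, map_add, map_pow, map_one, tau_t, tau_x, tau_y] at h1 h2 h3 ⊢
    suffices h : tauT ^ 2 * tau N = tau β * tau B * tau w ^ 3 by linear_combination h
    have key : X 2 ^ 2 * (1 + X 2) * ((1 + X 1 ^ 2) * (X 1 - tauT * (1 + X 1 ^ 2))
        + tauT * tau α ^ 2 - tau m * X 1 * tau α + tau c * X 1 ^ 2) =
        X 1 * (1 + X 1 ^ 2 * X 2) * tau B := by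
      rw [h2, ← hτ]
      linear_combination (X 2 ^ 2 * (1 + X 1 ^ 2 * X 2) * tau β ^ 2
        - tau c * X 1 * X 2 * (1 + X 2) - X 1 * (X 2 - 1) ^ 2 * tauT * (1 + X 2)
        - X 2 * (X 2 + X 1 ^ 2)) * h4
    apply mul_left_cancel₀ (pow_ne_zero 3 hX1)
    apply mul_left_cancel₀ (pow_ne_zero 3 h1y)
    apply mul_left_cancel₀ (pow_ne_zero 2 hq)
    generalize tau B = B' at *
    generalize tau α = α' at *
    generalize tau β = β' at *
    generalize tau w = w' at *
    generalize tau N = N' at *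
    have h5 : w' ^ 3 * (1 + X 2) ^ 3 = 1 := by rw [← mul_pow, h3, one_pow]
    obtain ⟨b, hb⟩ : ∃ b : M, b = (1 + X 1 ^ 2) * (X 1 - tauT * (1 + X 1 ^ 2))
        + tauT * α' ^ 2 - tau m * X 1 * α' + tau c * X 1 ^ 2 := ⟨_, rfl⟩
    rw [← hb] at key h1
    linear_combination tauT ^ 2 * (1 + X 1 ^ 2 * X 2) ^ 2 * (1 + X 2) ^ 3 * h1
      + (tauT * (1 + X 2) * (1 + X 1 ^ 2 * X 2) + X 1 * X 2) * (1 + X 2) * α' * b * h4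
      + X 1 ^ 2 * α' * key
      - X 1 ^ 3 * (1 + X 1 ^ 2 * X 2) * B' * hτ
      - X 1 ^ 3 * (1 + X 1 ^ 2 * X 2) ^ 2 * β' * B' * h5
  have e2 : rho 2 (X 0 ^ 2 * (N - d)) = X 0 ^ 2 * (N - d) := by simp [rho_X, hN2, hd2]
  have e1 : rho 1 (X 0 ^ 2 * (N - d)) = 0 := by simp [hd1, ← hd]
  have f1 : rho 1 (β * B * w ^ 3 - X 0 ^ 2 * d) = β * B * w ^ 3 - X 0 ^ 2 * d := by
    simp [rho_X, hβ1, hB1, hw1, hd1]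
  obtain ⟨he, hf⟩ := invariant_lemma e2 f1 e1 hmain
  have hNd : N = d := by
    have := (mul_eq_zero.1 he).resolve_left (pow_ne_zero 2 (MX_ne_zero 0))
    exact sub_eq_zero.1 this
  refine ⟨c, d, α, β, (1 + X 2) * S1, hc1, hc2, hd1, hd2, hα2, hβ1, hα, hyβ, hβ, ?_, ?_⟩
  · rw [← hm, ← hN3, hNd, mul_comm]
  · have h5 : w ^ 3 * (1 + X 2) ^ 3 = 1 := by rw [← mul_pow, hw, one_pow]
    rw [← hm, ← hB]
    linear_combination (1 + X 2) ^ 3 * hf - β * B * h5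

/-! ### Critical points of the cubics -/

/-- The Catalan series evaluated at a series `z` in `t` without constant term. -/
lemma exists_catalan (z : M) (hz : constantCoeff z = 0) (h1 : rho 1 z = z) (h2 : rho 2 z = z) :
    ∃ C : M, C = 1 + z * C ^ 2 ∧ rho 1 C = C ∧ rho 2 C = C := by
  have hs := PowerSeries.HasSubst.of_constantCoeff_zero hz
  obtain ⟨C, hC⟩ : ∃ C : M, C = 1 + z * C ^ 2 := by
    refine ⟨PowerSeries.substAlgHom (R := ℚ) hs
      (PowerSeries.map (Nat.castRingHom ℚ) PowerSeries.catalanSeries), ?_⟩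
    have h := congrArg (PowerSeries.map (Nat.castRingHom ℚ))
      PowerSeries.catalanSeries_sq_mul_X_add_one
    replace h := congrArg (PowerSeries.substAlgHom (R := ℚ) hs) h
    simp only [map_add, map_mul, map_pow, map_one, PowerSeries.map_X,
      PowerSeries.substAlgHom_X] at h
    linear_combination -h
  refine ⟨rho 1 (rho 2 C), ?_, rho_idem _ _, ?_⟩
  · have h := congrArg (fun f => rho 1 (rho 2 f)) hC
    simpa [h1, h2] using h
  · rw [rho_rho, rho_idem, rho_rho]

lemma pderiv_eq_zero_of_rho {i : Fin 3} {f : M} (h : rho i f = f) : pderiv ℚ i f = 0 := by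
  ext m
  rw [coeff_pderiv, ← h, coeff_rho, if_neg (by simp)]
  simp

/-- A series in `t` is not changed by a substitution fixing `t`. -/
lemma sb_eq_self {f : M} (h1 : rho 1 f = f) (h2 : rho 2 f = f) {v : Fin 3 → M} (hv)
    (h0 : v 0 = X 0) : sb v hv f = f := by
  have hu : ∀ i, constantCoeff ((![X 0, 0, 0] : Fin 3 → M) i) = 0 := by
    intro i; fin_cases i <;> simp
  have key : sb _ hu f = f := by
    conv_rhs => rw [← h2, ← h1]
    unfold rho
    refine (sb_sb _ _ hu (fun i => ?_) f).symm
    change rho 2 _ = _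
    fin_cases i <;> simp [rho_X]
  conv_lhs => rw [← key]
  rw [sb_sb hu hv hu (fun i => ?_), key]
  fin_cases i <;> simp [sb_X, h0]

lemma rho_ofNat (i : Fin 3) (n : ℕ) [n.AtLeastTwo] : rho i (OfNat.ofNat n : M) = OfNat.ofNat n :=
  map_ofNat _ n

lemma M_two_ne_zero : (2 : M) ≠ 0 := by
  intro h
  have := congrArg constantCoeff h
  rw [map_ofNat, map_zero] at this
  norm_num at this

/-- At the series `x = X(t)` with `2t(1 + x²) = x`, the cubic for `α` has a double root. The
conclusion is written in terms of the normalised root `v = tα/x`: the polynomial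
`v³ - m v² + (1/4 + tc) v - t²d` and its derivative vanish at `v`. -/
lemma x_point {m c d α R : M} (hm1 : rho 1 m = m) (hm2 : rho 2 m = m) (hc1 : rho 1 c = c)
    (hc2 : rho 2 c = c) (hd1 : rho 1 d = d) (hd2 : rho 2 d = d) (hα : α = 1 + X 1 * R)
    (hC : α * ((1 + X 1 ^ 2) * (X 1 - X 0 * (1 + X 1 ^ 2)) + X 0 * α ^ 2
      - m * X 1 * α + c * X 1 ^ 2) = d * X 1 ^ 3) :
    ∃ v : M, 1 + 4 * (X 0 * c) = 4 * (2 * m * v - 3 * v ^ 2) ∧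
      X 0 ^ 2 * d = m * v ^ 2 - 2 * v ^ 3 := by
  obtain ⟨K, hK, -, -⟩ := exists_catalan (4 * X 0 ^ 2) (by simp)
    (by rw [map_mul, map_pow, rho_X, if_neg (by decide), rho_ofNat])
    (by rw [map_mul, map_pow, rho_X, if_neg (by decide), rho_ofNat])
  obtain ⟨x, hx⟩ : ∃ x : M, x = 2 * X 0 * K := ⟨_, rfl⟩
  have hx0 : constantCoeff x = 0 := by simp [hx]
  have hK0 : constantCoeff K = 1 := by rw [hK]; simp
  have hxx : 2 * X 0 * (1 + x ^ 2) = x := by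
    rw [hx]; linear_combination -2 * X 0 * hK
  have hxn : x ≠ 0 := by
    rw [hx]
    refine mul_ne_zero (mul_ne_zero M_two_ne_zero (MX_ne_zero 0)) ?_
    rintro h; simp [h] at hK0
  have hv : ∀ i, constantCoeff ((![X 0, x, 0] : Fin 3 → M) i) = 0 := by
    intro i; fin_cases i <;> simp [hx0]
  have hD := congrArg (pderiv ℚ 1) hC
  simp only [map_add, map_sub, Derivation.leibniz, Derivation.leibniz_pow, smul_eq_mul,
    pderiv_eq_zero_of_rho hm1, pderiv_eq_zero_of_rho hc1, pderiv_eq_zero_of_rho hd1,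
    pderiv_X_self, pderiv_X_of_ne (show (0 : Fin 3) ≠ 1 by decide), Derivation.map_one_eq_zero,
    nsmul_eq_mul, Nat.cast_ofNat, Nat.add_one_sub_one, pow_one] at hD
  replace hD := congrArg (sb _ hv) hD
  replace hC := congrArg (sb _ hv) hC
  replace hα := congrArg (sb _ hv) hα
  have e0 : sb _ hv (X 0) = X 0 := sb_X _ _ _
  have e1 : sb _ hv (X 1) = x := sb_X _ _ _
  simp only [map_add, map_sub, map_mul, map_pow, map_one, map_zero, map_ofNat,
    sb_eq_self hm1 hm2 hv rfl, sb_eq_self hc1 hc2 hv rfl,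
    sb_eq_self hd1 hd2 hv rfl, e0, e1] at hD hC hα
  generalize sb _ hv α = α₀ at *
  generalize sb _ hv (pderiv ℚ 1 α) = α₁ at *
  generalize sb _ hv R = R₀ at *
  have hdbl : x * (1 + x ^ 2) + 6 * X 0 * α₀ ^ 2 - 4 * m * x * α₀ + 2 * c * x ^ 2 = 0 := by
    -- the derivative of the cubic with respect to `x` along `α`, combined with the cubic itself,
    -- has this factorisation precisely because `2t(1 + x²) = x`; the first factor has constant
    -- term `-1`
    have : (x * α₁ - α₀) *
        (x * (1 + x ^ 2) + 6 * X 0 * α₀ ^ 2 - 4 * m * x * α₀ + 2 * c * x ^ 2) = 0 := by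
      linear_combination 2 * x * hD - 6 * hC + ((x * α₁ - α₀) * (1 + x ^ 2)
        - 2 * α₀ * (1 - x ^ 2)) * hxx
    refine (mul_eq_zero.1 this).resolve_left fun h => ?_
    simpa [hα, hx0] using congrArg constantCoeff h
  -- `x = 2tK` with `K⁻¹ = 1 - 4t²K`
  obtain ⟨v, hxv⟩ : ∃ v, x * v = X 0 * α₀ := by
    have h2 : (2 : M) * C (1 / 2 : ℚ) = 1 := by
      rw [← map_ofNat (C (σ := Fin 3)) 2, ← map_mul]; norm_num
    refine ⟨C (1 / 2 : ℚ) * α₀ * (1 - 4 * X 0 ^ 2 * K), ?_⟩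
    rw [hx]
    linear_combination X 0 * K * α₀ * (1 - 4 * X 0 ^ 2 * K) * h2 + X 0 * α₀ * hK
  have h1 : 1 + 4 * (X 0 * c) = 4 * (2 * m * v - 3 * v ^ 2) := by
    apply mul_left_cancel₀ (pow_ne_zero 2 hxn)
    linear_combination 2 * X 0 * hdbl - x * hxx + (12 * (x * v + X 0 * α₀) - 8 * m * x) * hxv
  refine ⟨v, h1, ?_⟩
  have h2 : 4 * (X 0 ^ 2 * d) = v * (1 + 4 * (X 0 * c)) + 4 * v ^ 3 - 4 * m * v ^ 2 := by
    apply mul_left_cancel₀ (pow_ne_zero 3 hxn)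
    linear_combination -4 * X 0 ^ 2 * hC - X 0 * α₀ * (2 * X 0 * (1 + x ^ 2) - x) * hxx
      + (-x ^ 2 - 4 * (x ^ 2 * v ^ 2 + x * v * (X 0 * α₀) + (X 0 * α₀) ^ 2)
        + 4 * m * x * (x * v + X 0 * α₀) - 4 * (X 0 * c) * x ^ 2) * hxv
  apply mul_left_cancel₀ (mul_ne_zero M_two_ne_zero M_two_ne_zero)
  linear_combination h2 + v * h1

/-- At the series `y = ±t(1 + y)²`, the cubic for `β` has a double root. The conclusion is written
in terms of the normalised root `v = yβ/(1+y)`: the polynomial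
`v³ - m v² + (±2t - 4t² + tc) v - t²d` and its derivative vanish at `v`. -/
lemma y_point {s : M} (hs : s = 1 ∨ s = -1) {m c d β S' : M}
    (hm1 : rho 1 m = m) (hm2 : rho 2 m = m)
    (hc1 : rho 1 c = c) (hc2 : rho 2 c = c) (hd1 : rho 1 d = d) (hd2 : rho 2 d = d)
    (hβ : β = 1 - X 0 * S')
    (hC : β * ((X 2 ^ 2 - 1) ^ 2 * X 0 ^ 2 + X 2 ^ 2 + X 2 ^ 3 * β ^ 2
      - m * X 2 ^ 2 * β * (1 + X 2) + c * X 0 * X 2 * (1 + X 2) ^ 2) =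
      X 0 ^ 2 * d * (1 + X 2) ^ 3) :
    ∃ v : M, 2 * s * X 0 - 4 * X 0 ^ 2 + X 0 * c = 2 * m * v - 3 * v ^ 2 ∧
      X 0 ^ 2 * d = m * v ^ 2 - 2 * v ^ 3 := by
  have hs2 : s ^ 2 = 1 := by rcases hs with rfl | rfl <;> ring
  have hsr : ∀ i, rho i s = s := by rcases hs with rfl | rfl <;> simp
  have hsn : s ≠ 0 := by rcases hs with rfl | rfl <;> simp
  obtain ⟨K, hK, -, -⟩ := exists_catalan (s * X 0) (by simp) (by simp [rho_X, hsr])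
    (by simp [rho_X, hsr])
  have hK0 : constantCoeff K = 1 := by rw [hK]; simp
  have hKn : K ≠ 0 := by rintro rfl; simp at hK0
  obtain ⟨y, hy⟩ : ∃ y : M, y = K - 1 := ⟨_, rfl⟩
  have hy0 : constantCoeff y = 0 := by simp [hy, hK0]
  have hyy : y = s * X 0 * (1 + y) ^ 2 := by
    rw [hy]; linear_combination hK
  have hw : (1 + y) ≠ 0 := by rw [hy]; simpa using hKn
  have hyn : y ≠ 0 := by
    rw [hyy]
    exact mul_ne_zero (mul_ne_zero hsn (MX_ne_zero 0)) (pow_ne_zero 2 hw)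
  have hv : ∀ i, constantCoeff ((![X 0, 0, y] : Fin 3 → M) i) = 0 := by
    intro i; fin_cases i <;> simp [hy0]
  have hD := congrArg (pderiv ℚ 2) hC
  simp only [map_add, map_sub, Derivation.leibniz, Derivation.leibniz_pow, smul_eq_mul,
    pderiv_eq_zero_of_rho hm2, pderiv_eq_zero_of_rho hc2, pderiv_eq_zero_of_rho hd2,
    pderiv_X_self, pderiv_X_of_ne (show (0 : Fin 3) ≠ 2 by decide), Derivation.map_one_eq_zero,
    nsmul_eq_mul, Nat.cast_ofNat, Nat.add_one_sub_one, pow_one] at hD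
  replace hD := congrArg (sb _ hv) hD
  replace hC := congrArg (sb _ hv) hC
  replace hβ := congrArg (sb _ hv) hβ
  have e0 : sb _ hv (X 0) = X 0 := sb_X _ _ _
  have e2 : sb _ hv (X 2) = y := sb_X _ _ _
  simp only [map_add, map_sub, map_mul, map_pow, map_one, map_zero, map_ofNat,
    sb_eq_self hm1 hm2 hv rfl, sb_eq_self hc1 hc2 hv rfl,
    sb_eq_self hd1 hd2 hv rfl, e0, e2] at hD hC hβ
  generalize sb _ hv β = β₀ at *
  generalize sb _ hv (pderiv ℚ 2 β) = β₁ at *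
  generalize sb _ hv S' = S₀ at *
  have hdbl : (y ^ 2 - 1) ^ 2 * X 0 ^ 2 + y ^ 2 + 3 * y ^ 3 * β₀ ^ 2
      - 2 * m * y ^ 2 * (1 + y) * β₀ + X 0 * c * y * (1 + y) ^ 2 = 0 := by
    -- the same factorisation, valid because `y² = t²(1 + y)⁴`; the first factor has constant
    -- term `1`
    have : (y * (1 + y) * β₁ + β₀) * ((y ^ 2 - 1) ^ 2 * X 0 ^ 2 + y ^ 2 + 3 * y ^ 3 * β₀ ^ 2
      - 2 * m * y ^ 2 * (1 + y) * β₀ + X 0 * c * y * (1 + y) ^ 2) = 0 := by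
      linear_combination y * (1 + y) * hD - 3 * y * hC - β₀ * (1 - y) *
        ((y + s * X 0 * (1 + y) ^ 2) * hyy + X 0 ^ 2 * (1 + y) ^ 4 * hs2)
    refine (mul_eq_zero.1 this).resolve_left fun h => ?_
    simpa [hβ, hy0] using congrArg constantCoeff h
  -- `1 + y = K` with `K⁻¹ = 1 - stK`
  obtain ⟨v, hvw⟩ : ∃ v, v * (1 + y) = y * β₀ := by
    refine ⟨y * β₀ * (1 - s * X 0 * K), ?_⟩
    rw [show 1 + y = K by rw [hy]; ring]
    linear_combination y * β₀ * hK
  have h1 : 2 * s * X 0 - 4 * X 0 ^ 2 + X 0 * c = 2 * m * v - 3 * v ^ 2 := by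
    apply mul_left_cancel₀ (mul_ne_zero hyn (pow_ne_zero 2 hw))
    linear_combination hdbl - 2 * y * hyy
      + (y + s * X 0 * (1 + y) ^ 2) * hyy + X 0 ^ 2 * (1 + y) ^ 4 * hs2
      + (3 * y * (v * (1 + y) + y * β₀) - 2 * m * y * (1 + y)) * hvw
  refine ⟨v, h1, ?_⟩
  have h2 : X 0 ^ 2 * d = v * (2 * s * X 0 - 4 * X 0 ^ 2 + X 0 * c) + v ^ 3 - m * v ^ 2 := by
    apply mul_left_cancel₀ (pow_ne_zero 3 hw)
    linear_combination -hC - β₀ * (-2 * y * hyy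
      + (y + s * X 0 * (1 + y) ^ 2) * hyy + X 0 ^ 2 * (1 + y) ^ 4 * hs2)
      + (-(1 + y) ^ 2 * (2 * s * X 0 - 4 * X 0 ^ 2)
        - ((1 + y) ^ 2 * v ^ 2 + (1 + y) * v * (y * β₀) + (y * β₀) ^ 2)
        + m * (1 + y) * ((1 + y) * v + y * β₀) - X 0 * c * (1 + y) ^ 2) * hvw
  linear_combination h2 + v * h1

/-! ### Elimination -/

/-- If `v³ - m v² + P v - δ` has the double root `v`, then its discriminant vanishes. -/
lemma disc_eq_zero {P m δ v : M} (h1 : P = 2 * m * v - 3 * v ^ 2)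
    (h2 : δ = m * v ^ 2 - 2 * v ^ 3) :
    -4 * P ^ 3 + m ^ 2 * P ^ 2 + 18 * m * δ * P - 4 * m ^ 3 * δ - 27 * δ ^ 2 = 0 := by
  subst h1 h2; ring

lemma M_ne_zero_of_constantCoeff {f : M} (h : constantCoeff f ≠ 0) : f ≠ 0 := by
  rintro rfl; simp at h

/-- The discriminant of `v³ - m v² + P v - δ`, a cubic polynomial in `P`, vanishes at
`P = 1/4 + h`, `2t - 4t² + h`, `-2t - 4t² + h`. The sum of the roots gives `h`, a divided
difference gives `mδ`, and the last equation is `m²` times the discriminant at `P = 1/4 + h`,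
cleared of denominators. -/
lemma elimination {m h δ v₁ v₂ v₃ : M}
    (h1 : 1 + 4 * h = 4 * (2 * m * v₁ - 3 * v₁ ^ 2)) (d1 : δ = m * v₁ ^ 2 - 2 * v₁ ^ 3)
    (h2 : 2 * 1 * X 0 - 4 * X 0 ^ 2 + h = 2 * m * v₂ - 3 * v₂ ^ 2)
    (d2 : δ = m * v₂ ^ 2 - 2 * v₂ ^ 3)
    (h3 : 2 * (-1) * X 0 - 4 * X 0 ^ 2 + h = 2 * m * v₃ - 3 * v₃ ^ 2)
    (d3 : δ = m * v₃ ^ 2 - 2 * v₃ ^ 3) :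
    12 * h = m ^ 2 - 1 + 32 * X 0 ^ 2 ∧
    2592 * (m * δ) = 4 * ((m ^ 2 + 2 + 32 * X 0 ^ 2) ^ 2
      + (m ^ 2 + 2 + 32 * X 0 ^ 2) * (m ^ 2 - 1 + 24 * X 0 - 16 * X 0 ^ 2)
      + (m ^ 2 - 1 + 24 * X 0 - 16 * X 0 ^ 2) ^ 2)
      - 12 * m ^ 2 * ((m ^ 2 + 2 + 32 * X 0 ^ 2) + (m ^ 2 - 1 + 24 * X 0 - 16 * X 0 ^ 2)) ∧
    -4 * m ^ 2 * (1 + 4 * h) ^ 3 + 4 * m ^ 4 * (1 + 4 * h) ^ 2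
      + 16 * 18 * m ^ 2 * (m * δ) * (1 + 4 * h) - 64 * 4 * m ^ 4 * (m * δ)
      - 64 * 27 * (m * δ) ^ 2 = 0 := by
  have E2 := disc_eq_zero h2 d2
  have E3 := disc_eq_zero h3 d3
  have h4 : (4 : M) ≠ 0 := by
    have := mul_ne_zero M_two_ne_zero M_two_ne_zero
    norm_num at this; exact this
  have hq : (4 : M) * C (1 / 4 : ℚ) = 1 := by
    rw [← map_ofNat (C (σ := Fin 3)) 4, ← map_mul]; norm_num
  have E1 : -4 * (1 + 4 * h) ^ 3 + 4 * m ^ 2 * (1 + 4 * h) ^ 2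
      + 16 * 18 * m * δ * (1 + 4 * h) - 64 * 4 * m ^ 3 * δ - 64 * 27 * δ ^ 2 = 0 := by
    have := disc_eq_zero (P := C (1 / 4 : ℚ) + h) (m := m) (δ := δ) (v := v₁)
      (mul_left_cancel₀ h4 (by linear_combination h1 + hq)) d1
    generalize (C (1 / 4 : ℚ) : M) = q at *
    have hP : 1 + 4 * h = 4 * (q + h) := by linear_combination -hq
    rw [hP]; linear_combination 64 * this
  have n12 : (1 - 8 * X 0 + 16 * X 0 ^ 2 : M) ≠ 0 :=
    M_ne_zero_of_constantCoeff (by simp)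
  have n13 : (1 + 8 * X 0 + 16 * X 0 ^ 2 : M) ≠ 0 :=
    M_ne_zero_of_constantCoeff (by simp)
  obtain ⟨p, hp⟩ : ∃ p, p = 1 + 4 * h := ⟨_, rfl⟩
  -- divided differences of the discriminant, multiplied by `16`
  have F12 : -4 * (p ^ 2 + p * (4 * (2 * 1 * X 0 - 4 * X 0 ^ 2 + h))
      + (4 * (2 * 1 * X 0 - 4 * X 0 ^ 2 + h)) ^ 2)
      + 4 * m ^ 2 * (p + 4 * (2 * 1 * X 0 - 4 * X 0 ^ 2 + h)) + 16 * 18 * m * δ = 0 := by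
    apply mul_left_cancel₀ n12
    rw [hp]
    linear_combination E1 - 64 * E2
  have F13 : -4 * (p ^ 2 + p * (4 * (2 * (-1) * X 0 - 4 * X 0 ^ 2 + h))
      + (4 * (2 * (-1) * X 0 - 4 * X 0 ^ 2 + h)) ^ 2)
      + 4 * m ^ 2 * (p + 4 * (2 * (-1) * X 0 - 4 * X 0 ^ 2 + h)) + 16 * 18 * m * δ = 0 := by
    apply mul_left_cancel₀ n13
    rw [hp]
    linear_combination E1 - 64 * E3
  rw [hp] at F12 F13
  have G : 12 * h = m ^ 2 - 1 + 32 * X 0 ^ 2 := by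
    apply mul_left_cancel₀ (mul_ne_zero (mul_ne_zero h4 (mul_ne_zero h4 h4)) (MX_ne_zero 0))
    linear_combination (F13 - F12)
  refine ⟨G, ?_, ?_⟩
  · rw [show m ^ 2 + 2 + 32 * X 0 ^ 2 = 3 * (1 + 4 * h) by linear_combination -G,
      show m ^ 2 - 1 + 24 * X 0 - 16 * X 0 ^ 2 = 12 * (2 * 1 * X 0 - 4 * X 0 ^ 2 + h) by
        linear_combination -G]
    linear_combination 9 * F12
  · linear_combination m ^ 2 * E1

/-! ### Algebraicity -/

/-- The subalgebra of algebraic power series. -/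
abbrev AlgM : Subalgebra (MvPolynomial (Fin 3) ℚ) M :=
  Subalgebra.algebraicClosure (MvPolynomial (Fin 3) ℚ) M

lemma algebraMap_eq_coe : algebraMap (MvPolynomial (Fin 3) ℚ) M =
    MvPolynomial.coeToMvPowerSeries.ringHom := by
  refine RingHom.ext fun p => ?_
  rw [algebraMap_apply', Algebra.algebraMap_self, map_id]
  rfl

lemma X_mem_algM (i : Fin 3) : (X i : M) ∈ AlgM := by
  have := AlgM.algebraMap_mem (MvPolynomial.X i)
  rwa [algebraMap_eq_coe, MvPolynomial.coeToMvPowerSeries.ringHom_apply, MvPolynomial.coe_X] at this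

lemma mem_algM_of_root (p : Polynomial AlgM) (hp : p ≠ 0) {f : M}
    (hf : Polynomial.eval₂ (algebraMap AlgM M) f p = 0) : f ∈ AlgM := by
  rw [Subalgebra.mem_algebraicClosure]
  exact IsAlgebraic.restrictScalars (MvPolynomial (Fin 3) ℚ) (S := AlgM) ⟨p, hp, hf⟩

lemma mem_algM_of_mul {a b : M} (ha : a ∈ AlgM) (h : a * b ∈ AlgM) (h0 : a ≠ 0) : b ∈ AlgM := by
  refine mem_algM_of_root (Polynomial.C ⟨a, ha⟩ * Polynomial.X - Polynomial.C ⟨a * b, h⟩) ?_ ?_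
  · intro H
    have := congrArg (fun p => Polynomial.coeff p 1) H
    simp at this
    exact h0 (congrArg Subtype.val this)
  · simp [Polynomial.eval₂_sub, Polynomial.eval₂_mul]

lemma mem_algM_of_cubic {a b c d f : M} (ha : a ∈ AlgM) (hb : b ∈ AlgM) (hc : c ∈ AlgM)
    (hd : d ∈ AlgM) (h0 : a ≠ 0) (h : a * f ^ 3 + b * f ^ 2 + c * f + d = 0) : f ∈ AlgM := by
  refine mem_algM_of_root (Polynomial.C ⟨a, ha⟩ * Polynomial.X ^ 3
    + Polynomial.C ⟨b, hb⟩ * Polynomial.X ^ 2 + Polynomial.C ⟨c, hc⟩ * Polynomial.X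
    + Polynomial.C ⟨d, hd⟩) ?_ ?_
  · intro H
    have := congrArg (fun p => Polynomial.coeff p 3) H
    simp at this
    exact h0 (congrArg Subtype.val this)
  · simpa [Polynomial.eval₂_add, Polynomial.eval₂_mul, Subalgebra.algebraMap_def] using h

/-- The equation for `m` obtained by elimination is non-trivial: its coefficients are polynomials in
`t`, and for `t = 0` and `m = 0` its left-hand side is `-27 · 12²`. -/
lemma mem_algM_of_elimination {m : M}
    (h : ∃ A B V : M, A = m ^ 2 + 2 + 32 * X 0 ^ 2 ∧ B = m ^ 2 - 1 + 24 * X 0 - 16 * X 0 ^ 2 ∧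
      V = 4 * (A ^ 2 + A * B + B ^ 2) - 12 * m ^ 2 * (A + B) ∧
      -15552 * m ^ 2 * A ^ 3 + 46656 * m ^ 4 * A ^ 2 + 3888 * m ^ 2 * V * A - 10368 * m ^ 4 * V
        - 27 * V ^ 2 = 0) : m ∈ AlgM := by
  obtain ⟨A, B, V, hA, hB, hV, h⟩ := h
  let t : Polynomial (MvPolynomial (Fin 3) ℚ) := Polynomial.C (MvPolynomial.X 0)
  let T : Polynomial (MvPolynomial (Fin 3) ℚ) := Polynomial.X
  let a := T ^ 2 + 2 + 32 * t ^ 2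
  let b := T ^ 2 - 1 + 24 * t - 16 * t ^ 2
  let v := 4 * (a ^ 2 + a * b + b ^ 2) - 12 * T ^ 2 * (a + b)
  let p := -15552 * T ^ 2 * a ^ 3 + 46656 * T ^ 4 * a ^ 2 + 3888 * T ^ 2 * v * a
    - 10368 * T ^ 4 * v - 27 * v ^ 2
  rw [Subalgebra.mem_algebraicClosure]
  refine ⟨p, ?_, ?_⟩
  · intro hp
    have := congrArg (Polynomial.eval₂ (MvPolynomial.eval (fun _ : Fin 3 => (0 : ℚ))) 0) hp
    simp only [p, v, a, b, t, T, ← Polynomial.coe_eval₂RingHom, map_add, map_sub, map_mul,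
      map_pow, map_neg, map_ofNat, map_one, map_zero] at this
    simp only [Polynomial.coe_eval₂RingHom, Polynomial.eval₂_X, Polynomial.eval₂_C,
      MvPolynomial.eval_X] at this
    norm_num at this
  · have ht : Polynomial.aeval m t = (X 0 : M) := by
      simp only [t, Polynomial.aeval_C, algebraMap_eq_coe]
      exact MvPolynomial.coe_X _
    have hT : Polynomial.aeval m T = m := Polynomial.aeval_X m
    simp only [p, v, a, b, map_add, map_sub, map_mul, map_pow, map_neg, map_ofNat, map_one, ht, hT]
    rw [hV, hA, hB] at h
    exact h

/-- The complete generating function of Gessel walks is algebraic. -/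
theorem gesselGF_algebraic :
    ∃ P : Polynomial (MvPolynomial (Fin 3) ℚ), P ≠ 0 ∧
      Polynomial.eval₂ MvPolynomial.coeToMvPowerSeries.ringHom GesselGF P = 0 := by
  suffices h : GesselGF ∈ AlgM by
    rw [Subalgebra.mem_algebraicClosure] at h
    obtain ⟨P, hP, h⟩ := h
    refine ⟨P, hP, ?_⟩
    rwa [Polynomial.aeval_def, algebraMap_eq_coe] at h
  obtain ⟨c, d, α, β, S', hc1, hc2, hd1, hd2, hα2, hβ1, hα, hyβ, hβ, hCx, hCy⟩ := exists_cubics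
  obtain ⟨a, ha⟩ : ∃ a, a = serA := ⟨_, rfl⟩
  have hA1 : rho 1 a = a := by simp [ha, serA, rho_X, rho_idem]
  have hA2 : rho 2 a = a := by simp [ha, serA, rho_X, rho_rho 1 2, rho_idem]
  have hG := kernel_equation
  rw [← ha] at hyβ hCx hCy hG
  obtain ⟨m, hm⟩ : ∃ m, m = 1 + 2 * X 0 * a := ⟨_, rfl⟩
  rw [← hm] at hCx hCy
  have hm1 : rho 1 m = m := by
    rw [hm, map_add, map_mul, map_mul, map_one, rho_X, hA1, rho_ofNat]; rfl
  have hm2 : rho 2 m = m := by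
    rw [hm, map_add, map_mul, map_mul, map_one, rho_X, hA2, rho_ofNat]; rfl
  obtain ⟨v₁, h1, d1⟩ := x_point hm1 hm2 hc1 hc2 hd1 hd2 hα hCx
  obtain ⟨v₂, h2, d2⟩ := y_point (Or.inl rfl) hm1 hm2 hc1 hc2 hd1 hd2 hβ hCy
  obtain ⟨v₃, h3, d3⟩ := y_point (Or.inr rfl) hm1 hm2 hc1 hc2 hd1 hd2 hβ hCy
  obtain ⟨hh, hδ, hE⟩ := elimination h1 d1 h2 d2 h3 d3
  have t_mem := X_mem_algM 0
  have x_mem := X_mem_algM 1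
  have y_mem := X_mem_algM 2
  have ht : (X 0 : M) ≠ 0 := MX_ne_zero 0
  have hx : (X 1 : M) ≠ 0 := MX_ne_zero 1
  have hy : (X 2 : M) ≠ 0 := MX_ne_zero 2
  have num_mem : ∀ (n : ℕ) [n.AtLeastTwo], (OfNat.ofNat n : M) ∈ AlgM :=
    fun n _ => ofNat_mem AlgM n
  have num_ne : ∀ (n : ℕ) [n.AtLeastTwo], (OfNat.ofNat n : M) ≠ 0 := fun n _ => by
    refine M_ne_zero_of_constantCoeff ?_
    rw [map_ofNat]; exact OfNat.ofNat_ne_zero n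
  have hm0 : m ≠ 0 := M_ne_zero_of_constantCoeff (by simp [hm])
  have hmem : m ∈ AlgM := by
    refine mem_algM_of_elimination ⟨_, _, _, rfl, rfl, rfl, ?_⟩
    rw [← hδ, show m ^ 2 + 2 + 32 * X 0 ^ 2 = 3 * (1 + 4 * (X 0 * c)) by linear_combination -hh]
    linear_combination 104976 * hE
  have a_mem : a ∈ AlgM := by
    refine mem_algM_of_mul (a := 2 * X 0) (mul_mem (num_mem 2) t_mem) ?_
      (mul_ne_zero (num_ne 2) ht)
    rw [show 2 * X 0 * a = m - 1 by rw [hm]; ring]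
    exact sub_mem hmem (one_mem _)
  have c_mem : c ∈ AlgM := by
    refine mem_algM_of_mul (a := 12 * X 0) (mul_mem (num_mem 12) t_mem) ?_
      (mul_ne_zero (num_ne 12) ht)
    rw [mul_assoc, hh]
    repeat' with_reducible first
      | assumption | exact one_mem _ | exact num_mem _ | apply pow_mem | apply sub_mem
      | apply add_mem | apply neg_mem | apply mul_mem
  have d_mem : d ∈ AlgM := by
    refine mem_algM_of_mul (a := 2592 * (m * X 0 ^ 2))
      (mul_mem (num_mem _) (mul_mem hmem (pow_mem t_mem 2))) ?_
      (mul_ne_zero (num_ne _) (mul_ne_zero hm0 (pow_ne_zero 2 ht)))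
    rw [show 2592 * (m * X 0 ^ 2) * d = 2592 * (m * (X 0 ^ 2 * d)) by ring, hδ]
    repeat' with_reducible first
      | assumption | exact one_mem _ | exact num_mem _ | apply pow_mem | apply sub_mem
      | apply add_mem | apply neg_mem | apply mul_mem
  have α_mem : α ∈ AlgM := by
    refine mem_algM_of_cubic (a := X 0) (b := -(m * X 1))
      (c := (1 + X 1 ^ 2) * (X 1 - X 0 * (1 + X 1 ^ 2)) + c * X 1 ^ 2) (d := -(d * X 1 ^ 3))
      t_mem ?_ ?_ ?_ ht (by linear_combination hCx)
    all_goals repeat' with_reducible first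
      | assumption | exact one_mem _ | exact num_mem _ | apply pow_mem | apply sub_mem
      | apply add_mem | apply neg_mem | apply mul_mem
  have β_mem : β ∈ AlgM := by
    refine mem_algM_of_cubic (a := X 2 ^ 3) (b := -(m * X 2 ^ 2 * (1 + X 2)))
      (c := (X 2 ^ 2 - 1) ^ 2 * X 0 ^ 2 + X 2 ^ 2 + c * X 0 * X 2 * (1 + X 2) ^ 2)
      (d := -(X 0 ^ 2 * d * (1 + X 2) ^ 3))
      (pow_mem y_mem 3) ?_ ?_ ?_ (pow_ne_zero 3 hy) (by linear_combination hCy)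
    all_goals repeat' with_reducible first
      | assumption | exact one_mem _ | exact num_mem _ | apply pow_mem | apply sub_mem
      | apply add_mem | apply neg_mem | apply mul_mem
  have R_mem : serR ∈ AlgM := by
    refine mem_algM_of_mul x_mem ?_ hx
    rw [show X 1 * serR = α - 1 by rw [hα]; ring]
    exact sub_mem α_mem (one_mem _)
  have S_mem : serS ∈ AlgM := by
    refine mem_algM_of_mul (a := X 0 * (1 + X 2))
      (mul_mem t_mem (add_mem (one_mem _) y_mem)) ?_
      (mul_ne_zero ht (M_ne_zero_of_constantCoeff (by simp)))
    rw [show X 0 * (1 + X 2) * serS = X 0 * (1 + X 2) * a + X 2 - X 2 * β by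
      linear_combination hyβ]
    repeat' with_reducible first
      | assumption | exact one_mem _ | exact num_mem _ | apply pow_mem | apply sub_mem
      | apply add_mem | apply neg_mem | apply mul_mem
  refine mem_algM_of_mul (a := X 1 * X 2 - X 0 * (1 + X 2) * (1 + X 1 ^ 2 * X 2)) ?_ ?_ ?_
  · repeat' with_reducible first
      | assumption | exact one_mem _ | exact num_mem _ | apply pow_mem | apply sub_mem
      | apply add_mem | apply neg_mem | apply mul_mem
  · rw [hG]
    repeat' with_reducible first
      | assumption | exact one_mem _ | exact num_mem _ | apply pow_mem | apply sub_mem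
      | apply add_mem | apply neg_mem | apply mul_mem
  -- at `t = 0` the kernel is `xy`
  · intro h
    have := congrArg (rho 0) h
    simp [rho_X, hx, hy] at this
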